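/- Let b = p_1 ∩ ⋯ ∩ p_l be a finite intersection of prime ideals of R, n = dim M for a finitely generated module M over a Noetherian local ring, and suppose H^n_{p_i}(M) = 0 for each i. Then H^n_b(M) = 0. -/

import Mathlib

universe u

open RingTheory.Sequence CategoryTheory

noncomputable section

/-- `N :_M a`, set of `m : M` with `a • m ⊆ N`. -/
def Submodule.modColon {R : Type u} [CommRing R] {M : Type u} [AddCommGroup M] [Module R M]
    (N : Submodule R M) (a : Ideal R) : Submodule R M :=
  ⨅ r ∈ a, N.comap (LinearMap.lsmul R M r)

/-- The ideals `a` and `b` are linked by `I` over `M`: `I ⊆ a ⊓ b` is generated by an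
`M`-regular sequence, `bM = IM :_M a`, `aM = IM :_M b`, and `aM ≠ M ≠ bM`. -/
def Ideal.IsLinkedBy {R : Type u} [CommRing R] (M : Type u) [AddCommGroup M] [Module R M]
    (I a b : Ideal R) : Prop :=
  (∃ rs : List R, RingTheory.Sequence.IsRegular M rs ∧ I = Ideal.ofList rs) ∧
  I ≤ a ⊓ b ∧
  a • (⊤ : Submodule R M) ≠ ⊤ ∧ b • (⊤ : Submodule R M) ≠ ⊤ ∧
  Submodule.modColon (I • (⊤ : Submodule R M)) a = b • (⊤ : Submodule R M) ∧
  Submodule.modColon (I • (⊤ : Submodule R M)) b = a • (⊤ : Submodule R M)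

/-- Cohomological dimension `cd(a, M) = sup { i | H^i_a(M) ≠ 0 }`. -/
def cohDim {R : Type u} [CommRing R] (a : Ideal R) (M : Type u) [AddCommGroup M]
    [Module R M] : ℕ∞ :=
  sSup {n : ℕ∞ | ∃ i : ℕ, n = i ∧ Nontrivial ↥((localCohomology a i).obj (ModuleCat.of R M))}

/-- `grade_M(a)`: the supremum of lengths of `M`-regular sequences contained in `a`. -/
def gradeM {R : Type u} [CommRing R] (a : Ideal R) (M : Type u) [AddCommGroup M]
    [Module R M] : ℕ :=
  sSup {n : ℕ | ∃ rs : List R, rs.length = n ∧ (∀ r ∈ rs, r ∈ a) ∧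
    RingTheory.Sequence.IsRegular M rs}

variable {R : Type u} [CommRing R] [IsNoetherianRing R] [IsLocalRing R]
variable {M : Type u} [AddCommGroup M] [Module R M] [Module.Finite R M] [Nontrivial M]

/-
A class in `Hⁿ_J(M) = colim Extⁿ(A ⧸ I, M)`, the colimit being over the ideals `I` with `J ≤ √I`,
is zero exactly when it already dies in some such `Extⁿ(A ⧸ I', M)` with `I' ≤ I`. By Artin–Rees
the ideals `K ⊓ L` with `𝔞 ≤ √K` and `𝔟 ≤ √L` are cofinal among the ideals `I` with `𝔞 ⊓ 𝔟 ≤ √I`,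
so the Mayer–Vietoris sequences of `0 → A ⧸ (K ⊓ L) → A ⧸ K × A ⧸ L → A ⧸ (K ⊔ L) → 0` show that
`Hⁿ_{𝔞 ⊓ 𝔟}(M)` vanishes as soon as `Hⁿ_𝔞(M)`, `Hⁿ_𝔟(M)` and `Hⁿ⁺¹_{𝔞 ⊔ 𝔟}(M)` do. For `dim M ≤ n`
the last one is zero by Grothendieck's vanishing theorem, and one inducts on the number of ideals.
-/

section DerivedExt

open Opposite

universe v

variable {A : Type v} [Ring A] {C : Type*} [Category.{v} C] [Abelian C] [Linear A C]

variable (A) in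
/-- The morphism of cochain complexes `Hom(L, Y) ⟶ Hom(K, Y)` given by precomposition with a
morphism of chain complexes `K ⟶ L`. -/
def linearYonedaObjMap {K L : ChainComplex C ℕ} (φ : K ⟶ L) (Y : C) :
    L.linearYonedaObj A Y ⟶ K.linearYonedaObj A Y :=
  (HomologicalComplex.unopFunctor _ _).map
    ((((linearYoneda A C).obj Y).rightOp.mapHomologicalComplex _).map φ).op

lemma homologyMap_unop_comp_homologyUnop_inv {V : Type*} [Category V] [Abelian V]
    {c : ComplexShape ℕ} {K L : HomologicalComplex Vᵒᵖ c} (ψ : K ⟶ L) (n : ℕ) :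
    (HomologicalComplex.homologyMap ψ n).unop ≫ (K.homologyUnop n).inv =
      (L.homologyUnop n).inv ≫
        HomologicalComplex.homologyMap ((HomologicalComplex.unopFunctor _ _).map ψ.op) n := by
  refine (Iso.comp_inv_eq _).2 (Eq.trans ((Iso.eq_inv_comp _).2 ?_) (Category.assoc _ _ _).symm)
  exact congrArg Quiver.Hom.unop (HomologicalComplex.homologyOp_hom_naturality
    ((HomologicalComplex.unopFunctor _ _).map ψ.op) n)

lemma isoExt_hom_naturality [EnoughProjectives C] {X X' : C} {g : X' ⟶ X}
    {P' : ProjectiveResolution X'} {P : ProjectiveResolution X}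
    (φ : ProjectiveResolution.Hom P' P g) (n : ℕ) (Y : C) :
    ((Ext A C n).map g.op).app Y ≫ (P'.isoExt n Y).hom =
      (P.isoExt n Y).hom ≫ HomologicalComplex.homologyMap (linearYonedaObjMap A φ.hom Y) n := by
  let F := ((linearYoneda A C).obj Y).rightOp
  have hLeftDerived := congrArg Quiver.Hom.unop
    (ProjectiveResolution.isoLeftDerivedObj_inv_naturality g P' P φ.hom
      (by simpa using φ.hom_f_zero_comp_π_f_zero) F n)
  have hHomology := homologyMap_unop_comp_homologyUnop_inv
    ((F.mapHomologicalComplex (ComplexShape.down ℕ)).map φ.hom) n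
  have hIso := congrArg (· ≫ (HomologicalComplex.homologyUnop _ n).inv) hLeftDerived
  rw [unop_comp, unop_comp] at hIso
  refine (Category.assoc _ _ _).symm.trans (hIso.trans ((Category.assoc _ _ _).trans ?_))
  exact (congrArg ((P.isoLeftDerivedObj F n).inv.unop ≫ ·) hHomology).trans
    (Category.assoc _ _ _).symm

section CocycleClass

variable {L L' : CochainComplex (ModuleCat.{v} A) ℕ} {n : ℕ}

/-- The cohomology class of a cocycle `x` of a cochain complex of modules. -/
def cocycleClass (x : L.X n) (hx : L.d n (n + 1) x = 0) : L.homology n :=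
  L.homologyπ n (L.cyclesMk (C := ModuleCat A) x (n + 1) (by simp) hx)

lemma cocycleClass_eq_homologyπ (z : L.cycles n) (hz : L.d n (n + 1) (L.iCycles n z) = 0) :
    cocycleClass (L.iCycles n z) hz = L.homologyπ n z := by
  have hInj := (ModuleCat.mono_iff_injective (L.iCycles n)).1 inferInstance
  exact congrArg (L.homologyπ n)
    (hInj (L.i_cyclesMk (C := ModuleCat A) (L.iCycles n z) (n + 1) (by simp) hz))

lemma exists_iCycles_eq (x : L.X n) (hx : L.d n (n + 1) x = 0) : ∃ z, L.iCycles n z = x :=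
  ⟨_, L.i_cyclesMk (C := ModuleCat A) x (n + 1) (by simp) hx⟩

lemma cocycleClass_eq_zero_iff (x : L.X n) (hx : L.d n (n + 1) x = 0) :
    cocycleClass x hx = 0 ↔ ∃ y, L.d ((ComplexShape.up ℕ).prev n) n y = x := by
  obtain ⟨z, rfl⟩ := exists_iCycles_eq x hx
  have hι := (ModuleCat.mono_iff_injective (L.homologyι n)).1 inferInstance
  have hπι : L.homologyι n (L.homologyπ n z) = (L.sc n).pOpcycles (L.iCycles n z) :=
    congr($(L.homology_π_ι n) z)
  rw [cocycleClass_eq_homologyπ, ← map_eq_zero_iff _ hι, hπι]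
  exact (L.sc n).moduleCat_pOpcycles_eq_zero_iff (L.iCycles n z)

lemma cocycleClass_surjective (c : L.homology n) : ∃ x hx, cocycleClass (L := L) x hx = c := by
  obtain ⟨z, rfl⟩ := (ModuleCat.epi_iff_surjective (L.homologyπ n)).1 inferInstance c
  exact ⟨_, congr($(L.iCycles_d n (n + 1)) z), cocycleClass_eq_homologyπ z _⟩

lemma homologyMap_cocycleClass (φ : L ⟶ L') (x : L.X n) (hx : L.d n (n + 1) x = 0)
    (hx' : L'.d n (n + 1) (φ.f n x) = 0) :
    HomologicalComplex.homologyMap φ n (cocycleClass x hx) = cocycleClass (φ.f n x) hx' := by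
  obtain ⟨z, rfl⟩ := exists_iCycles_eq x hx
  have hz : L'.iCycles n (HomologicalComplex.cyclesMap φ n z) = φ.f n (L.iCycles n z) :=
    congr($(HomologicalComplex.cyclesMap_i φ n) z)
  simp only [← hz, cocycleClass_eq_homologyπ]
  exact congr($(HomologicalComplex.homologyπ_naturality φ n) z)

end CocycleClass

variable {X X' Y : C} {P : ProjectiveResolution X} {P' : ProjectiveResolution X'} {n : ℕ}

lemma extMk_eq_zero_iff_exists_prev [HasExt C] (f : P.complex.X n ⟶ Y)
    (hf : P.complex.d (n + 1) n ≫ f = 0) : P.extMk f (n + 1) rfl hf = 0 ↔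
      ∃ g : P.complex.X ((ComplexShape.up ℕ).prev n) ⟶ Y, P.complex.d n _ ≫ g = f := by
  obtain _ | n := n
  · simp only [← P.extEquivCohomologyClass.apply_eq_iff_eq,
      ProjectiveResolution.extEquivCohomologyClass_extMk,
      ProjectiveResolution.extEquivCohomologyClass_zero,
      CochainComplex.HomComplex.CohomologyClass.mk_eq_zero_iff]
    rw [CochainComplex.HomComplex.Cocycle.toSingleMk_mem_coboundaries_iff _ _ _ _ _ 1 (by lia)]
    have hCochain : P.cochainComplex.d (-((0 : ℕ) : ℤ)) 1 = 0 :=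
      (CochainComplex.isZero_of_isStrictlyLE _ 0 1 (by lia)).eq_of_tgt _ _
    have hChain : P.complex.d 0 ((ComplexShape.up ℕ).prev 0) = 0 :=
      P.complex.shape _ _ (by simp)
    simp only [hCochain, hChain, Limits.zero_comp, exists_const]
    rw [eq_comm, Preadditive.IsIso.comp_left_eq_zero, eq_comm]
  · rw [P.extMk_eq_zero_iff f (n + 2) rfl hf n rfl, CochainComplex.prev_nat_succ]

variable [EnoughProjectives C]

variable (A) in
/-- The class in the left derived functor `Ext A C n` of an `n`-cocycle `f : Pₙ ⟶ Y` of a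
projective resolution `P` of `X`; the counterpart of `ProjectiveResolution.extMk`. -/
def derivedExtMk (f : P.complex.X n ⟶ Y) (hf : P.complex.d (n + 1) n ≫ f = 0) :
    ((Ext A C n).obj (op X)).obj Y :=
  (P.isoExt n Y).inv (cocycleClass (L := P.complex.linearYonedaObj A Y) f hf)

lemma derivedExtMk_eq_zero_iff (f : P.complex.X n ⟶ Y) (hf : P.complex.d (n + 1) n ≫ f = 0) :
    derivedExtMk A f hf = 0 ↔
      ∃ g : P.complex.X ((ComplexShape.up ℕ).prev n) ⟶ Y, P.complex.d n _ ≫ g = f := by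
  have hInj := (ModuleCat.mono_iff_injective (P.isoExt (R := A) n Y).inv).1 inferInstance
  exact (map_eq_zero_iff _ hInj).trans (cocycleClass_eq_zero_iff _ _)

lemma derivedExtMk_surjective (P : ProjectiveResolution X) (e : ((Ext A C n).obj (op X)).obj Y) :
    ∃ (f : P.complex.X n ⟶ Y) (hf : _), derivedExtMk A f hf = e := by
  obtain ⟨f, hf, h⟩ := cocycleClass_surjective ((P.isoExt n Y).hom e)
  refine ⟨f, hf, (congrArg (P.isoExt n Y).inv h).trans ?_⟩
  exact congr($((P.isoExt (R := A) n Y).hom_inv_id) e)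

lemma map_derivedExtMk {g : X' ⟶ X} (φ : ProjectiveResolution.Hom P' P g)
    (f : P.complex.X n ⟶ Y) (hf : P.complex.d (n + 1) n ≫ f = 0) :
    ((Ext A C n).map g.op).app Y (derivedExtMk A f hf) =
      derivedExtMk A (φ.hom.f n ≫ f)
        (by rw [← φ.hom.comm_assoc, hf, Limits.comp_zero]) := by
  have hNat : (P.isoExt (R := A) n Y).inv ≫ ((Ext A C n).map g.op).app Y =
      HomologicalComplex.homologyMap (linearYonedaObjMap A φ.hom Y) n ≫ (P'.isoExt n Y).inv := by
    rw [Iso.inv_comp_eq, ← Category.assoc, Iso.eq_comp_inv, isoExt_hom_naturality]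
  exact congr($hNat (cocycleClass (L := P.complex.linearYonedaObj A Y) f hf)).trans
    (congrArg (P'.isoExt n Y).inv (homologyMap_cocycleClass _ _ _ _))

lemma map_derivedExtMk_eq_zero_iff [HasExt C] (g : X' ⟶ X) (f : P.complex.X n ⟶ Y)
    (hf : P.complex.d (n + 1) n ≫ f = 0) :
    ((Ext A C n).map g.op).app Y (derivedExtMk A f hf) = 0 ↔
      (Abelian.Ext.mk₀ g).comp (P.extMk f (n + 1) rfl hf) (zero_add n) = 0 := by
  let φ : ProjectiveResolution.Hom (projectiveResolution X') P g :=
    { hom := ProjectiveResolution.lift g _ _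
      hom_f_zero_comp_π_f_zero := congr(($(ProjectiveResolution.lift_commutes g _ _)).f 0) }
  rw [map_derivedExtMk φ, derivedExtMk_eq_zero_iff,
    ProjectiveResolution.mk₀_comp_extMk f (n + 1) rfl hf φ, extMk_eq_zero_iff_exists_prev]

-- `localCohomology` is defined through the derived functors `Ext A C n`, whereas the long exact
-- sequences live on `Abelian.Ext`; only the vanishing of restricted classes has to be compared.
theorem forall_exists_map_derivedExt_eq_zero_iff [HasExt C] {ι : Type*} {X' : ι → C}
    (g : ∀ i, X' i ⟶ X) :
    (∀ e : ((Ext A C n).obj (op X)).obj Y, ∃ i, ((Ext A C n).map (g i).op).app Y e = 0) ↔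
      ∀ e : Abelian.Ext X Y n, ∃ i, (Abelian.Ext.mk₀ (g i)).comp e (zero_add n) = 0 := by
  let P := projectiveResolution X
  constructor
  · intro h e
    obtain ⟨f, hf, rfl⟩ := P.extMk_surjective e (n + 1) rfl
    exact (h (derivedExtMk A f hf)).imp fun i ↦ (map_derivedExtMk_eq_zero_iff (g i) f hf).1
  · intro h e
    obtain ⟨f, hf, rfl⟩ := derivedExtMk_surjective P e
    exact (h (P.extMk f (n + 1) rfl hf)).imp fun i ↦ (map_derivedExtMk_eq_zero_iff (g i) f hf).2

end DerivedExt

section LocalCohomology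

variable {A : Type u} [CommRing A] {M N : ModuleCat.{u} A} {n : ℕ}

section RestrictQuotient

/-- The projection `A ⧸ I ⟶ A ⧸ I'` for ideals `I ≤ I'`. -/
abbrev quotientProj {I I' : Ideal A} (h : I ≤ I') :
    ModuleCat.of A (A ⧸ I) ⟶ ModuleCat.of A (A ⧸ I') :=
  ModuleCat.ofHom (Submodule.mapQ I I' LinearMap.id h)

/-- The map `Extⁿ(A ⧸ I', M) → Extⁿ(A ⧸ I, M)` induced by the projection, for ideals `I ≤ I'`. -/
def restrictQuotient {I I' : Ideal A} (h : I ≤ I') :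
    Abelian.Ext (ModuleCat.of A (A ⧸ I')) M n →ₗ[A] Abelian.Ext (ModuleCat.of A (A ⧸ I)) M n :=
  (Abelian.Ext.mk₀ (quotientProj h)).precompOfLinear A M (zero_add n)

variable {I I' I'' : Ideal A}

lemma restrictQuotient_apply (h : I ≤ I') (e : Abelian.Ext (ModuleCat.of A (A ⧸ I')) M n) :
    restrictQuotient h e = (Abelian.Ext.mk₀ (quotientProj h)).comp e (zero_add n) :=
  rfl

lemma restrictQuotient_restrictQuotient (h : I ≤ I') (h' : I' ≤ I'')
    (e : Abelian.Ext (ModuleCat.of A (A ⧸ I'')) M n) :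
    restrictQuotient h (restrictQuotient h' e) = restrictQuotient (h.trans h') e := by
  have hProj : quotientProj h ≫ quotientProj h' = quotientProj (h.trans h') := by ext; rfl
  simp only [restrictQuotient_apply, Abelian.Ext.mk₀_comp_mk₀_assoc, hProj]

lemma restrictQuotient_comp (h : I ≤ I') {a b c : ℕ}
    (e : Abelian.Ext (ModuleCat.of A (A ⧸ I')) M a) (f : Abelian.Ext M N b) (hc : a + b = c) :
    restrictQuotient h (e.comp f hc) = (restrictQuotient h e).comp f hc :=
  (Abelian.Ext.comp_assoc _ _ _ (zero_add a) hc (by lia)).symm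

lemma smul_ext_quotient_eq_zero {r : A} (hr : r ∈ I)
    (e : Abelian.Ext (ModuleCat.of A (A ⧸ I)) N n) : r • e = 0 := by
  have h : r • 𝟙 (ModuleCat.of A (A ⧸ I)) = 0 := by
    rw [← ModuleCat.lsmul_eq_smul_id,
      Module.mem_annihilator_iff_lsmul_eq_zero.1 (by rwa [Ideal.annihilator_quotient])]
    rfl
  rw [← Abelian.Ext.mk₀_id_comp e, ← Abelian.Ext.smul_comp, ← Abelian.Ext.mk₀_smul, h,
    Abelian.Ext.mk₀_zero, Abelian.Ext.zero_comp]

end RestrictQuotient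

/-- A class `e ∈ Extⁿ(A ⧸ I, M)` is `J`-negligible if it dies in `Extⁿ(A ⧸ I', M)` for some
smaller ideal `I'` whose radical contains `J`, i.e. if its image in `Hⁿ_J(M)` is zero. -/
def IsNegligible (J : Ideal A) {I : Ideal A} (e : Abelian.Ext (ModuleCat.of A (A ⧸ I)) M n) :
    Prop :=
  ∃ (I' : Ideal A) (h : I' ≤ I), J ≤ I'.radical ∧ restrictQuotient h e = 0

/-- The vanishing of `Hⁿ_J(M)`, expressed in terms of the modules `Extⁿ(A ⧸ I, M)`, where `I`
ranges over all ideals whose radical contains `J`. -/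
def LocalCohomologyVanishes (J : Ideal A) (n : ℕ) (M : ModuleCat.{u} A) : Prop :=
  ∀ I : Ideal A, J ≤ I.radical → ∀ e : Abelian.Ext (ModuleCat.of A (A ⧸ I)) M n, IsNegligible J e

section Colimit

open Limits Opposite

instance isCofiltered_selfLERadical (J : Ideal A) :
    IsCofiltered (localCohomology.SelfLERadical J) where
  cone_objs I I' := ⟨⟨I.1 ⊓ I'.1, (le_inf I.2 I'.2).trans (Ideal.radical_inf _ _).ge⟩,
    ⟨homOfLE inf_le_left⟩, ⟨homOfLE inf_le_right⟩, trivial⟩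
  cone_maps I _ _ _ := ⟨I, 𝟙 I, rfl⟩
  nonempty := inferInstance

theorem subsingleton_colimit_iff {D : Type u} [SmallCategory D] [IsFiltered D]
    (F : D ⥤ ModuleCat.{u} A ⥤ ModuleCat.{u} A) (M : ModuleCat.{u} A) :
    Subsingleton ((colimit F).obj M) ↔
      ∀ i, ∀ x : (F.obj i).obj M, ∃ (j : D) (f : i ⟶ j), (F.map f).app M x = 0 := by
  let c := ((evaluation _ _).obj M).mapCocone (colimit.cocone F)
  have hc : IsColimit c := isColimitOfPreserves _ (colimit.isColimit F)
  constructor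
  · intro (hs : Subsingleton c.pt) i x
    obtain ⟨j, f, g, h⟩ := Concrete.isColimit_exists_of_rep_eq _ hc x (0 : (F.obj i).obj M)
      (hs.elim _ _)
    exact ⟨j, f, h.trans (map_zero ((F.map g).app M).hom)⟩
  · refine fun h ↦ subsingleton_of_forall_eq 0 fun y ↦ ?_
    obtain ⟨i, x, rfl⟩ := Concrete.isColimit_exists_rep _ hc y
    obtain ⟨j, f, hf⟩ := h i x
    calc c.ι.app i x = c.ι.app j ((F.map f).app M x) := congr($(c.w f) x).symm
      _ = 0 := by rw [hf]; exact map_zero (c.ι.app j).hom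

lemma forall_isNegligible_iff (J I : Ideal A) :
    (∀ e : Abelian.Ext (ModuleCat.of A (A ⧸ I)) M n, IsNegligible J e) ↔
      ∀ x : ((Ext A (ModuleCat.{u} A) n).obj (op (ModuleCat.of A (A ⧸ I)))).obj M,
        ∃ (I' : Ideal A) (h : I' ≤ I), J ≤ I'.radical ∧
          ((Ext A (ModuleCat.{u} A) n).map (quotientProj h).op).app M x = 0 := by
  have exists_subtype_iff (P : ∀ I' : Ideal A, I' ≤ I → Prop) :
      (∃ (I' : Ideal A) (h : I' ≤ I), J ≤ I'.radical ∧ P I' h) ↔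
        ∃ I' : {I' : Ideal A // I' ≤ I ∧ J ≤ I'.radical}, P I' I'.2.1 :=
    ⟨fun ⟨I', h, hJ, hP⟩ ↦ ⟨⟨I', h, hJ⟩, hP⟩, fun ⟨I', hP⟩ ↦ ⟨I', I'.2.1, I'.2.2, hP⟩⟩
  simp only [IsNegligible, restrictQuotient_apply, exists_subtype_iff]
  exact (forall_exists_map_derivedExt_eq_zero_iff _).symm

theorem subsingleton_localCohomology_iff [IsNoetherianRing A] (J : Ideal A) (n : ℕ)
    (M : ModuleCat.{u} A) :
    Subsingleton ((localCohomology J n).obj M) ↔ LocalCohomologyVanishes J n M := by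
  rw [← ((localCohomology.isoSelfLERadical J n).app M).toLinearEquiv.subsingleton_congr]
  refine (subsingleton_colimit_iff _ M).trans ⟨fun h I hI ↦ ?_, fun h I x ↦ ?_⟩
  · refine (forall_isNegligible_iff J I).2 fun x ↦ ?_
    obtain ⟨I', f, hx⟩ := h (op ⟨I, hI⟩) x
    exact ⟨I'.unop.1, f.unop.hom.le, I'.unop.2, hx⟩
  · obtain ⟨I', hI', hJ, hx⟩ := (forall_isNegligible_iff J I.unop.1).1 (h _ I.unop.2) x
    exact ⟨op ⟨I', hJ⟩, (ObjectProperty.homMk (homOfLE hI')).op, hx⟩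

end Colimit

namespace IsNegligible

variable {J J' I I' : Ideal A}

lemma of_eq_zero (hI : J ≤ I.radical) {e : Abelian.Ext (ModuleCat.of A (A ⧸ I)) M n}
    (he : e = 0) : IsNegligible J e :=
  ⟨I, le_rfl, hI, by rw [he, map_zero]⟩

lemma mono {e : Abelian.Ext (ModuleCat.of A (A ⧸ I)) M n} (he : IsNegligible J e) (h : J' ≤ J) :
    IsNegligible J' e :=
  he.imp fun _ ⟨hI', hJ, h₀⟩ ↦ ⟨hI', h.trans hJ, h₀⟩

lemma of_restrictQuotient {h : I ≤ I'} {e : Abelian.Ext (ModuleCat.of A (A ⧸ I')) M n}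
    (he : IsNegligible J (restrictQuotient h e)) : IsNegligible J e := by
  obtain ⟨I₀, h₀, hJ, he⟩ := he
  exact ⟨I₀, h₀.trans h, hJ, (restrictQuotient_restrictQuotient h₀ h e).symm.trans he⟩

lemma restrictQuotient {e : Abelian.Ext (ModuleCat.of A (A ⧸ I')) M n} (he : IsNegligible J e)
    (h : I ≤ I') (hI : J ≤ I.radical) : IsNegligible J (restrictQuotient h e) := by
  obtain ⟨I₀, h₀, hJ, he⟩ := he
  refine ⟨I₀ ⊓ I, inf_le_right, (le_inf hJ hI).trans (Ideal.radical_inf _ _).ge, ?_⟩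
  rw [restrictQuotient_restrictQuotient, ← restrictQuotient_restrictQuotient inf_le_left h₀, he,
    map_zero]

lemma add {e e' : Abelian.Ext (ModuleCat.of A (A ⧸ I)) M n} (he : IsNegligible J e)
    (he' : IsNegligible J e') : IsNegligible J (e + e') := by
  obtain ⟨I₁, h₁, hJ₁, he⟩ := he
  obtain ⟨I₂, h₂, hJ₂, he'⟩ := he'
  refine ⟨I₁ ⊓ I₂, inf_le_left.trans h₁, (le_inf hJ₁ hJ₂).trans (Ideal.radical_inf _ _).ge, ?_⟩
  rw [map_add, ← restrictQuotient_restrictQuotient inf_le_left h₁, he,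
    ← restrictQuotient_restrictQuotient inf_le_right h₂, he', map_zero, map_zero, add_zero]

lemma comp {a b c : ℕ} {e : Abelian.Ext (ModuleCat.of A (A ⧸ I)) M a} (he : IsNegligible J e)
    (f : Abelian.Ext M N b) (hc : a + b = c) : IsNegligible J (e.comp f hc) := by
  obtain ⟨I₀, h₀, hJ, he⟩ := he
  exact ⟨I₀, h₀, hJ, by rw [restrictQuotient_comp, he, Abelian.Ext.zero_comp]⟩

end IsNegligible

namespace LocalCohomologyVanishes

variable {J : Ideal A}

lemma of_shortExact {S : ShortComplex (ModuleCat.{u} A)} (hS : S.ShortExact)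
    (h₁ : LocalCohomologyVanishes J n S.X₁) (h₃ : LocalCohomologyVanishes J n S.X₃) :
    LocalCohomologyVanishes J n S.X₂ := by
  intro I hI e
  obtain ⟨I', hI', hJ, h⟩ := h₃ I hI (e.comp (Abelian.Ext.mk₀ S.g) (add_zero n))
  rw [restrictQuotient_comp] at h
  obtain ⟨x, hx⟩ := Abelian.Ext.covariant_sequence_exact₂ _ hS _ h
  exact .of_restrictQuotient (h := hI') (hx ▸ (h₁ I' hJ x).comp _ _)

lemma of_subsingleton [Subsingleton M] : LocalCohomologyVanishes J n M := by
  intro I hI e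
  have hM : 𝟙 M = 0 := (ModuleCat.isZero_of_subsingleton M).eq_of_src _ _
  exact .of_eq_zero hI (by
    rw [← Abelian.Ext.comp_mk₀_id e, hM, Abelian.Ext.mk₀_zero, Abelian.Ext.comp_zero])

lemma top : LocalCohomologyVanishes ⊤ n M := by
  intro I hI e
  obtain rfl : I = ⊤ := Ideal.radical_eq_top.1 (top_le_iff.1 hI)
  exact .of_eq_zero hI ((one_smul A e).symm.trans (smul_ext_quotient_eq_zero Submodule.mem_top e))

end LocalCohomologyVanishes

section MayerVietoris

variable {I I' K K' : Ideal A}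

/-- The complex `A ⧸ (I ⊓ K) ⟶ (A ⧸ I) × (A ⧸ K) ⟶ A ⧸ (I ⊔ K)`, whose second map is the
difference of the two projections. -/
def mayerVietorisComplex (I K : Ideal A) : ShortComplex (ModuleCat.{u} A) :=
  ModuleCat.shortComplexOfCompEqZero (M := A ⧸ (I ⊓ K)) (N := (A ⧸ I) × (A ⧸ K))
    (L := A ⧸ (I ⊔ K))
    (LinearMap.prod (Submodule.mapQ _ _ LinearMap.id inf_le_left)
      (Submodule.mapQ _ _ LinearMap.id inf_le_right))
    (Submodule.mapQ I (I ⊔ K) LinearMap.id le_sup_left ∘ₗ LinearMap.fst A _ _ -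
      Submodule.mapQ K (I ⊔ K) LinearMap.id le_sup_right ∘ₗ LinearMap.snd A _ _)
    (by ext; simp)

lemma mayerVietorisComplex_shortExact (I K : Ideal A) :
    (mayerVietorisComplex I K).ShortExact := by
  apply ModuleCat.shortComplex_shortExact
  · rintro ⟨⟨x⟩, ⟨y⟩⟩
    constructor
    · intro (h : (Submodule.Quotient.mk x : A ⧸ (I ⊔ K)) - Submodule.Quotient.mk y = 0)
      rw [← Submodule.Quotient.mk_sub, Submodule.Quotient.mk_eq_zero, Submodule.mem_sup] at h
      obtain ⟨a, ha, b, hb, hab⟩ := h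
      refine ⟨Submodule.Quotient.mk (x - a), Prod.ext ?_ ?_⟩
      · exact (Submodule.Quotient.eq I).2 (by simpa using ha)
      · refine (Submodule.Quotient.eq K).2 ?_
        rwa [LinearMap.id_apply, show x - a - y = b by linear_combination -hab]
    · rintro ⟨⟨z⟩, hz⟩
      rw [← hz]
      exact sub_self (Submodule.Quotient.mk z : A ⧸ (I ⊔ K))
  · rw [injective_iff_map_eq_zero]
    rintro ⟨z⟩ hz
    exact (Submodule.Quotient.mk_eq_zero _).2
      ⟨(Submodule.Quotient.mk_eq_zero I).1 (congrArg Prod.fst hz),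
        (Submodule.Quotient.mk_eq_zero K).1 (congrArg Prod.snd hz)⟩
  · rintro ⟨z⟩
    exact ⟨(Submodule.Quotient.mk z, 0), sub_zero (Submodule.Quotient.mk z : A ⧸ (I ⊔ K))⟩

/-- The morphism of Mayer–Vietoris complexes given by the projections. -/
def mayerVietorisComplexMap (hI : I ≤ I') (hK : K ≤ K') :
    mayerVietorisComplex I K ⟶ mayerVietorisComplex I' K' where
  τ₁ := quotientProj (inf_le_inf hI hK)
  τ₂ := ModuleCat.ofHom (LinearMap.prodMap (Submodule.mapQ I I' LinearMap.id hI)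
    (Submodule.mapQ K K' LinearMap.id hK))
  τ₃ := quotientProj (sup_le_sup hI hK)
  comm₁₂ := by ext ⟨_⟩; rfl
  comm₂₃ := by ext ⟨⟨_⟩, ⟨_⟩⟩; rfl

/-- The connecting map `Extⁿ(A ⧸ (I ⊓ K), M) → Extⁿ⁺¹(A ⧸ (I ⊔ K), M)`. -/
def mayerVietorisδ (e : Abelian.Ext (ModuleCat.of A (A ⧸ (I ⊓ K))) M n) :
    Abelian.Ext (ModuleCat.of A (A ⧸ (I ⊔ K))) M (n + 1) :=
  (mayerVietorisComplex_shortExact I K).extClass.comp e (add_comm 1 n)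

lemma mayerVietorisδ_restrictQuotient (hI : I ≤ I') (hK : K ≤ K')
    (e : Abelian.Ext (ModuleCat.of A (A ⧸ (I' ⊓ K'))) M n) :
    mayerVietorisδ (restrictQuotient (inf_le_inf hI hK) e) =
      restrictQuotient (sup_le_sup hI hK) (mayerVietorisδ e) := by
  have hNat := (mayerVietorisComplex_shortExact I K).extClass_naturality
    (mayerVietorisComplex_shortExact I' K') (mayerVietorisComplexMap hI hK)
  exact (Abelian.Ext.comp_assoc (mayerVietorisComplex_shortExact I K).extClass
      (Abelian.Ext.mk₀ (mayerVietorisComplexMap hI hK).τ₁) e (add_zero 1) (zero_add n)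
      (by lia)).symm.trans
    ((congrArg (fun z ↦ z.comp e (add_comm 1 n)) hNat).trans
      (Abelian.Ext.comp_assoc (Abelian.Ext.mk₀ (mayerVietorisComplexMap hI hK).τ₃)
        (mayerVietorisComplex_shortExact I' K').extClass e (zero_add 1) (add_comm 1 n) (by lia)))

lemma exists_restrictQuotient_add_eq (e : Abelian.Ext (ModuleCat.of A (A ⧸ (I ⊓ K))) M n)
    (he : mayerVietorisδ e = 0) :
    ∃ e₁ e₂, restrictQuotient (inf_le_left : I ⊓ K ≤ I) e₁ +
      restrictQuotient (inf_le_right : I ⊓ K ≤ K) e₂ = e := by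
  obtain ⟨x, rfl⟩ :=
    Abelian.Ext.contravariant_sequence_exact₁ (mayerVietorisComplex_shortExact I K) _ _ _ he
  let inl : ModuleCat.of A (A ⧸ I) ⟶ (mayerVietorisComplex I K).X₂ :=
    ModuleCat.ofHom (LinearMap.inl A (A ⧸ I) (A ⧸ K))
  let inr : ModuleCat.of A (A ⧸ K) ⟶ (mayerVietorisComplex I K).X₂ :=
    ModuleCat.ofHom (LinearMap.inr A (A ⧸ I) (A ⧸ K))
  have hf : quotientProj inf_le_left ≫ inl + quotientProj inf_le_right ≫ inr =
      (mayerVietorisComplex I K).f := by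
    ext ⟨z⟩
    exact Prod.ext (add_zero _) (zero_add _)
  refine ⟨(Abelian.Ext.mk₀ inl).comp x (zero_add n), (Abelian.Ext.mk₀ inr).comp x (zero_add n), ?_⟩
  rw [restrictQuotient_apply, restrictQuotient_apply, Abelian.Ext.mk₀_comp_mk₀_assoc,
    Abelian.Ext.mk₀_comp_mk₀_assoc, ← Abelian.Ext.add_comp, ← Abelian.Ext.mk₀_add]
  exact congrArg (fun z ↦ (Abelian.Ext.mk₀ z).comp x (zero_add n)) hf

lemma exists_inf_le_of_inf_le_radical [IsNoetherianRing A] {𝔞 𝔟 I : Ideal A}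
    (h : 𝔞 ⊓ 𝔟 ≤ I.radical) :
    ∃ K L : Ideal A, 𝔞 ≤ K.radical ∧ 𝔟 ≤ L.radical ∧ K ⊓ L ≤ I := by
  obtain ⟨t, ht⟩ := Ideal.exists_pow_le_of_le_radical_of_fg h (IsNoetherian.noetherian _)
  obtain ⟨k, hk⟩ := Ideal.exists_pow_inf_eq_pow_smul (M := A) 𝔞 (𝔟 ^ t)
  refine ⟨𝔞 ^ (k + t), 𝔟 ^ t, fun r hr ↦ ⟨_, Ideal.pow_mem_pow hr _⟩,
    fun r hr ↦ ⟨_, Ideal.pow_mem_pow hr _⟩, ?_⟩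
  calc 𝔞 ^ (k + t) ⊓ 𝔟 ^ t
      = 𝔞 ^ t • (𝔞 ^ k ⊓ 𝔟 ^ t) := by
        simpa using hk (k + t) (Nat.le_add_right k t)
    _ ≤ 𝔞 ^ t * 𝔟 ^ t := Ideal.mul_mono_right inf_le_right
    _ = (𝔞 * 𝔟) ^ t := (mul_pow 𝔞 𝔟 t).symm
    _ ≤ (𝔞 ⊓ 𝔟) ^ t := Ideal.pow_right_mono Ideal.mul_le_inf t
    _ ≤ I := ht

theorem LocalCohomologyVanishes.inf [IsNoetherianRing A] {𝔞 𝔟 : Ideal A}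
    (h𝔞 : LocalCohomologyVanishes 𝔞 n M) (h𝔟 : LocalCohomologyVanishes 𝔟 n M)
    (hSup : LocalCohomologyVanishes (𝔞 ⊔ 𝔟) (n + 1) M) :
    LocalCohomologyVanishes (𝔞 ⊓ 𝔟) n M := by
  intro I hI e
  obtain ⟨K, L, hK, hL, hKL⟩ := exists_inf_le_of_inf_le_radical hI
  obtain ⟨C, hC, hJC, hδ⟩ := hSup (K ⊔ L)
    (sup_le (hK.trans (Ideal.radical_mono le_sup_left))
      (hL.trans (Ideal.radical_mono le_sup_right)))
    (mayerVietorisδ (restrictQuotient hKL e))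
  have hKC : 𝔞 ≤ (K ⊓ C).radical :=
    (le_inf hK (le_sup_left.trans hJC)).trans (Ideal.radical_inf _ _).ge
  have hLC : 𝔟 ≤ (L ⊓ C).radical :=
    (le_inf hL (le_sup_right.trans hJC)).trans (Ideal.radical_inf _ _).ge
  have hInf : 𝔞 ⊓ 𝔟 ≤ ((K ⊓ C) ⊓ (L ⊓ C)).radical :=
    (inf_le_inf hKC hLC).trans (Ideal.radical_inf _ _).ge
  set e' := restrictQuotient hKL e
  have hδ' : mayerVietorisδ (restrictQuotient (inf_le_inf (inf_le_left : K ⊓ C ≤ K)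
      (inf_le_left : L ⊓ C ≤ L)) e') = 0 := by
    rw [mayerVietorisδ_restrictQuotient inf_le_left inf_le_left,
      ← restrictQuotient_restrictQuotient (sup_le inf_le_right inf_le_right) hC, hδ, map_zero]
  obtain ⟨e₁, e₂, he⟩ := exists_restrictQuotient_add_eq _ hδ'
  suffices IsNegligible (𝔞 ⊓ 𝔟) (restrictQuotient _ e₁ + restrictQuotient _ e₂) from
    .of_restrictQuotient (.of_restrictQuotient (he ▸ this))
  exact (((h𝔞 _ hKC e₁).mono inf_le_left).restrictQuotient _ hInf).add
    (((h𝔟 _ hLC e₂).mono inf_le_right).restrictQuotient _ hInf)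

end MayerVietoris

section Torsion

variable {J : Ideal A} {E F : Type u} [AddCommGroup E] [Module A E] [AddCommGroup F] [Module A F]

lemma le_radical_torsionOf {x : E} (hx : x ∈ J.primaryComponent E) :
    J ≤ (Ideal.torsionOf A E x).radical := by
  obtain ⟨k, hk⟩ := (J.primaryComponent_mem _ x).1 hx
  exact fun r hr ↦ ⟨k, (Submodule.mem_torsionBySet_iff _ x).1 hk ⟨_, Ideal.pow_mem_pow hr k⟩⟩

lemma primaryComponent_primaryComponent (J : Ideal A) (E : Type u) [AddCommGroup E] [Module A E] :
    J.primaryComponent (J.primaryComponent E) = ⊤ := by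
  refine eq_top_iff.2 fun x _ ↦ ?_
  obtain ⟨k, hk⟩ := (J.primaryComponent_mem _ (x : E)).1 x.2
  refine (J.primaryComponent_mem _ x).2 ⟨k, ?_⟩
  simpa [Submodule.mem_torsionBySet_iff, Subtype.ext_iff] using hk

lemma primaryComponent_eq_top_of_surjective {f : E →ₗ[A] F} (hf : Function.Surjective f)
    (hE : J.primaryComponent E = ⊤) : J.primaryComponent F = ⊤ := by
  refine eq_top_iff.2 fun y _ ↦ ?_
  obtain ⟨x, rfl⟩ := hf y
  exact J.primaryComponent_map_mem f ⟨x, hE.ge trivial⟩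

lemma exists_pow_le_annihilator {P : Submodule A E} (hP : P.FG)
    (h : P ≤ J.primaryComponent E) : ∃ k, J ^ k ≤ P.annihilator := by
  have hDir : Directed (· ≤ ·) fun k ↦ Submodule.torsionBySet A E (J ^ k : Ideal A) :=
    (monotone_nat_of_le_succ fun k ↦
      Submodule.torsionBySet_le_torsionBySet_pow k (k + 1) k.le_succ J).directed_le
  obtain ⟨_, ⟨k, rfl⟩, hk⟩ := (CompleteLattice.isCompactElement_iff_le_of_directed_sSup_le _ _).1
    ((Submodule.fg_iff_compact P).1 hP) _ (Set.range_nonempty _) hDir.directedOn_range h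
  exact ⟨k, fun r hr ↦ Submodule.mem_annihilator.2 fun x hx ↦
    (Submodule.mem_torsionBySet_iff _ x).1 (hk hx) ⟨r, hr⟩⟩

lemma exists_comap_pow_le_ker [IsNoetherianRing A] {I : Ideal A} {g : I →ₗ[A] E} {k : ℕ}
    (hg : J ^ k ≤ g.range.annihilator) :
    ∃ s, Submodule.comap I.subtype (J ^ s) ≤ g.ker := by
  obtain ⟨c, hc⟩ := Ideal.exists_pow_inf_eq_pow_smul (M := A) J I
  refine ⟨c + k, fun x hx ↦ ?_⟩
  have hAR : J ^ (c + k) ⊓ I ≤ Submodule.map I.subtype (J ^ k • ⊤) := by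
    have := hc (c + k) (Nat.le_add_right c k)
    rw [smul_eq_mul, Ideal.mul_top, Nat.add_sub_cancel_left] at this
    rw [this, Submodule.map_smul'', Submodule.map_subtype_top]
    exact Submodule.smul_mono le_rfl inf_le_right
  obtain ⟨y, hy, hyx⟩ := hAR ⟨hx, x.2⟩
  obtain rfl : y = x := Subtype.ext hyx
  have hker : J ^ k • (⊤ : Submodule A I) ≤ g.ker := Submodule.smul_le.2 fun r hr z _ ↦ by
    rw [LinearMap.mem_ker, map_smul]
    exact Submodule.mem_annihilator.1 (hg hr) _ ⟨z, rfl⟩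
  exact hker hy

lemma baer_primaryComponent [IsNoetherianRing A] (J : Ideal A) (hE : Module.Injective A E) :
    Module.Baer A (J.primaryComponent E) := by
  intro I g
  obtain ⟨k, hk⟩ := exists_pow_le_annihilator (J := J)
    (Module.Finite.iff_fg.1 (Module.Finite.range g))
    (le_top.trans (primaryComponent_primaryComponent J E).ge)
  obtain ⟨s, hs⟩ := exists_comap_pow_le_ker hk
  let i : (I ⧸ Submodule.comap I.subtype (J ^ s)) →ₗ[A] (A ⧸ J ^ s) :=
    Submodule.mapQ _ _ I.subtype le_rfl
  have hi : Function.Injective i := by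
    rw [injective_iff_map_eq_zero]
    rintro ⟨z⟩ hz
    exact (Submodule.Quotient.mk_eq_zero _).2 ((Submodule.Quotient.mk_eq_zero (J ^ s)).1 hz)
  obtain ⟨h, hh⟩ := hE.out i hi ((J.primaryComponent E).subtype ∘ₗ Submodule.liftQ _ g hs)
  have hmem (r : A) : h (Submodule.Quotient.mk r) ∈ J.primaryComponent E := by
    refine (J.primaryComponent_mem _ _).2 ⟨s, (Submodule.mem_torsionBySet_iff _ _).2 ?_⟩
    rintro ⟨a, ha⟩
    have hzero : a • (Submodule.Quotient.mk r : A ⧸ J ^ s) = 0 :=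
      (Submodule.Quotient.mk_eq_zero (J ^ s)).2 (Ideal.mul_mem_right r _ ha)
    exact (map_smul h a _).symm.trans ((congrArg h hzero).trans (map_zero h))
  exact ⟨LinearMap.codRestrict _ (h ∘ₗ (J ^ s).mkQ) hmem,
    fun x hx ↦ Subtype.ext (hh (Submodule.Quotient.mk ⟨x, hx⟩))⟩

theorem exists_injective_primaryComponent_eq_top [IsNoetherianRing A]
    (hN : J.primaryComponent N = ⊤) :
    ∃ (G : ModuleCat.{u} A) (f : N ⟶ G), Mono f ∧ Injective G ∧ J.primaryComponent G = ⊤ := by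
  let E : ModuleCat.{u} A := Injective.under N
  have hEObj : Injective (ModuleCat.of A E) := inferInstanceAs (Injective (Injective.under N))
  have hE : Module.Injective A E := Module.injective_module_of_injective_object A E
  have hmem (x : N) : (Injective.ι N).hom x ∈ J.primaryComponent E :=
    J.primaryComponent_map_mem (Injective.ι N).hom ⟨x, hN.ge trivial⟩
  refine ⟨ModuleCat.of A (J.primaryComponent E),
    ModuleCat.ofHom (LinearMap.codRestrict _ (Injective.ι N).hom hmem), ?_, ?_,
    primaryComponent_primaryComponent J E⟩
  · have hι := (ModuleCat.mono_iff_injective (Injective.ι N)).1 inferInstance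
    exact (ModuleCat.mono_iff_injective _).2 fun x y h ↦ hι (congrArg Subtype.val h)
  · have := (baer_primaryComponent J hE).injective
    exact Module.injective_object_of_injective_module A (J.primaryComponent E)

lemma exists_shortExact_comp_extClass_eq [IsNoetherianRing A] (hN : J.primaryComponent N = ⊤) :
    ∃ (G Q : ModuleCat.{u} A) (f : N ⟶ G) (g : G ⟶ Q) (w : f ≫ g = 0)
      (hS : (ShortComplex.mk f g w).ShortExact), J.primaryComponent G = ⊤ ∧
        ∀ {X : ModuleCat.{u} A} {n : ℕ} (e : Abelian.Ext X N (n + 1)),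
          ∃ x : Abelian.Ext X Q n, x.comp hS.extClass rfl = e := by
  obtain ⟨G, f, _, _, hG⟩ := exists_injective_primaryComponent_eq_top hN
  have hS : (ShortComplex.mk f (Limits.cokernel.π f) (by simp)).ShortExact :=
    .mk' (ShortComplex.exact_cokernel f) inferInstance inferInstance
  exact ⟨G, _, f, _, _, hS, hG, fun e ↦ Abelian.Ext.covariant_sequence_exact₁ _ hS e
    (Abelian.Ext.eq_zero_of_injective (I := G) _) rfl⟩

lemma exists_quotientProj_comp_eq_comp {I : Ideal A} (hI : J ≤ I.radical)
    (hM : J.primaryComponent M = ⊤) (f : M ⟶ N) [Epi f] (q : ModuleCat.of A (A ⧸ I) ⟶ N) :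
    ∃ (I' : Ideal A) (h : I' ≤ I) (φ : ModuleCat.of A (A ⧸ I') ⟶ M),
      J ≤ I'.radical ∧ quotientProj h ≫ q = φ ≫ f := by
  obtain ⟨x, hx⟩ := (ModuleCat.epi_iff_surjective f).1 inferInstance (q (Submodule.Quotient.mk 1))
  refine ⟨I ⊓ Ideal.torsionOf A M x, inf_le_left,
    ModuleCat.ofHom (Submodule.liftQ _ (LinearMap.toSpanSingleton A M x) inf_le_right),
    (le_inf hI (le_radical_torsionOf (hM.ge trivial))).trans (Ideal.radical_inf _ _).ge, ?_⟩
  ext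
  refine hx.symm.trans (congrArg f (one_smul A x).symm)

lemma IsNegligible.mk₀_comp_extClass {S : ShortComplex (ModuleCat.{u} A)} (hS : S.ShortExact)
    (hS₂ : J.primaryComponent S.X₂ = ⊤) {I : Ideal A} (hI : J ≤ I.radical)
    (q : ModuleCat.of A (A ⧸ I) ⟶ S.X₃) :
    IsNegligible J ((Abelian.Ext.mk₀ q).comp hS.extClass (zero_add 1)) := by
  have := hS.epi_g
  obtain ⟨I', h, φ, hI', hq⟩ := exists_quotientProj_comp_eq_comp hI hS₂ S.g q
  refine ⟨I', h, hI', ?_⟩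
  rw [restrictQuotient_comp, restrictQuotient_apply, Abelian.Ext.mk₀_comp_mk₀, hq,
    ← Abelian.Ext.mk₀_comp_mk₀,
    Abelian.Ext.comp_assoc _ _ _ (zero_add 0) (zero_add 1) (by lia), hS.comp_extClass,
    Abelian.Ext.comp_zero]

theorem LocalCohomologyVanishes.of_primaryComponent_eq_top [IsNoetherianRing A]
    (hN : J.primaryComponent N = ⊤) (n : ℕ) : LocalCohomologyVanishes J (n + 1) N := by
  induction n generalizing N with
  | zero =>
    intro I hI e
    obtain ⟨G, Q, f, g, w, hS, hG, hShift⟩ := exists_shortExact_comp_extClass_eq hN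
    obtain ⟨x, rfl⟩ := hShift e
    obtain ⟨q, rfl⟩ := (Abelian.Ext.mk₀_bijective _ _).2 x
    exact .mk₀_comp_extClass hS hG hI q
  | succ n ih =>
    intro I hI e
    obtain ⟨G, Q, f, g, w, hS, hG, hShift⟩ := exists_shortExact_comp_extClass_eq hN
    obtain ⟨x, rfl⟩ := hShift e
    have hg := (ModuleCat.epi_iff_surjective g).1 hS.epi_g
    exact (ih (primaryComponent_eq_top_of_surjective hg hG) I hI x).comp _ _

end Torsion

section Dimension

variable {J : Ideal A}

lemma IsNegligible.of_pow_smul_eq_zero {Q : ModuleCat.{u} A} {r : A} {g : N ⟶ Q}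
    {w : (r • 𝟙 N) ≫ g = 0} (hS : (ShortComplex.mk (r • 𝟙 N) g w).ShortExact)
    (hQ : LocalCohomologyVanishes J n Q) {I : Ideal A} (hI : J ≤ I.radical)
    {e : Abelian.Ext (ModuleCat.of A (A ⧸ I)) N (n + 1)} {s : ℕ} (he : r ^ s • e = 0) :
    IsNegligible J e := by
  induction s generalizing I e with
  | zero => exact .of_eq_zero hI (by rwa [pow_zero, one_smul] at he)
  | succ s ih =>
    have hf : (r ^ s • e).comp (Abelian.Ext.mk₀ (r • 𝟙 N)) (add_zero _) = 0 := by
      rw [Abelian.Ext.mk₀_smul, Abelian.Ext.comp_smul, Abelian.Ext.comp_mk₀_id, smul_smul,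
        ← pow_succ', he]
    obtain ⟨z, hz⟩ := Abelian.Ext.covariant_sequence_exact₁ _ hS _ hf rfl
    obtain ⟨I', hI', hJ, hKill⟩ := (hQ I hI z).comp hS.extClass rfl
    rw [hz, map_smul] at hKill
    exact .of_restrictQuotient (ih hJ hKill)

namespace LocalCohomologyVanishes

lemma succ_of_isSMulRegular {r : A} (hrJ : r ∈ J) (hr : IsSMulRegular N r)
    (h : LocalCohomologyVanishes J n (ModuleCat.of A (QuotSMulTop r N))) :
    LocalCohomologyVanishes J (n + 1) N := by
  intro I hI e
  obtain ⟨s, hs⟩ := hI hrJ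
  exact .of_pow_smul_eq_zero hr.smulShortComplex_shortExact h hI (smul_ext_quotient_eq_zero hs e)

lemma succ_of_equiv_quotient_prime [IsNoetherianRing A] {p : Ideal A} [hp : p.IsPrime]
    {N : Type u} [AddCommGroup N] [Module A N] [Module.Finite A N] (i : N ≃ₗ[A] A ⧸ p)
    (h : ∀ r : A, Module.supportDim A (QuotSMulTop r N) + 1 ≤ Module.supportDim A N →
      LocalCohomologyVanishes J n (ModuleCat.of A (QuotSMulTop r N))) :
    LocalCohomologyVanishes J (n + 1) (ModuleCat.of A N) := by
  have hann : Module.annihilator A N = p := by rw [i.annihilator_eq, Ideal.annihilator_quotient]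
  by_cases hJ : J ≤ p
  · refine .of_primaryComponent_eq_top (eq_top_iff.2 fun x _ ↦ ?_) n
    refine (J.primaryComponent_mem _ x).2 ⟨1, (Submodule.mem_torsionBySet_iff _ x).2 fun r ↦ ?_⟩
    exact Module.mem_annihilator.1 (hann.ge (hJ ((pow_one J).le r.2))) x
  · obtain ⟨r, hrJ, hrp⟩ := SetLike.not_le_iff_exists.1 hJ
    refine .succ_of_isSMulRegular hrJ ?_
      (h r (Module.supportDim_quotSMulTop_succ_le_of_notMem_minimalPrimes fun q hq ↦ ?_))
    · refine (i.isSMulRegular_congr r).2 (isSMulRegular_iff_right_eq_zero_of_smul.2 ?_)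
      rintro ⟨x⟩ hx
      exact (Submodule.Quotient.mk_eq_zero p).2
        ((hp.mem_or_mem ((Submodule.Quotient.mk_eq_zero p).1 hx)).resolve_left hrp)
    · rw [hann, Ideal.minimalPrimes_eq_subsingleton_self] at hq
      rwa [Set.mem_singleton_iff.1 hq]

theorem of_supportDim_lt [IsNoetherianRing A] (J : Ideal A) {n : ℕ} {N : Type u} [AddCommGroup N]
    [Module A N] [hN : Module.Finite A N] (h : Module.supportDim A N < n) :
    LocalCohomologyVanishes J n (ModuleCat.of A N) := by
  induction n generalizing N with
  | zero =>
    have : Subsingleton N := by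
      by_contra! hNon
      have := (Module.nonempty_support_of_nontrivial (R := A) (M := N)).to_subtype
      exact h.not_ge Order.krullDim_nonneg
    exact of_subsingleton
  | succ n ih =>
    induction hN using IsNoetherianRing.induction_on_isQuotientEquivQuotientPrime A with
    | subsingleton N => exact of_subsingleton
    | quotient N p i =>
      have := p.2
      refine succ_of_equiv_quotient_prime i fun r hr ↦ ih ?_
      exact lt_of_add_lt_add_right (hr.trans_lt (by exact_mod_cast h))
    | exact N₁ N₂ N₃ f g hf hg hfg h₁ h₃ =>
      have hS := ModuleCat.shortComplex_shortExact
        (ModuleCat.shortComplexOfCompEqZero f g hfg.linearMap_comp_eq_zero) hfg hf hg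
      exact of_shortExact hS (h₁ ((Module.supportDim_le_of_injective f hf).trans_lt h))
        (h₃ ((Module.supportDim_le_of_surjective g hg).trans_lt h))

end LocalCohomologyVanishes

end Dimension

theorem LocalCohomologyVanishes.iInf [IsNoetherianRing A] {ι : Type*} [Finite ι]
    {p : ι → Ideal A} (h : ∀ i, LocalCohomologyVanishes (p i) n M)
    (hSucc : ∀ J : Ideal A, LocalCohomologyVanishes J (n + 1) M) :
    LocalCohomologyVanishes (⨅ i, p i) n M := by
  have := Fintype.ofFinite ι
  rw [← Finset.inf_univ_eq_iInf]
  exact Finset.inf_induction (p := fun J ↦ LocalCohomologyVanishes J n M) top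
    (fun _ h₁ _ h₂ ↦ h₁.inf h₂ (hSucc _)) fun i _ ↦ h i

theorem stmt17_general [IsNoetherianRing A] {N : Type u} [AddCommGroup N] [Module A N]
    [Module.Finite A N] {ι : Type*} [Finite ι] (p : ι → Ideal A)
    (hn : Module.supportDim A N ≤ n)
    (hvan : ∀ i, Subsingleton ((localCohomology (p i) n).obj (ModuleCat.of A N))) :
    Subsingleton ((localCohomology (⨅ i, p i) n).obj (ModuleCat.of A N)) := by
  simp only [subsingleton_localCohomology_iff] at hvan ⊢
  refine .iInf hvan fun J ↦ .of_supportDim_lt J (hn.trans_lt ?_)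
  exact_mod_cast n.lt_succ_self

end LocalCohomology

theorem stmt17 (l : ℕ) (hl : 0 < l) (p : Fin l → Ideal R) (hp : ∀ i, (p i).IsPrime)
    (n : ℕ)
    (hn : ((n : ℕ∞) : WithBot ℕ∞) = ringKrullDim (R ⧸ Module.annihilator R M))
    (hvan : ∀ i, Subsingleton ↥((localCohomology (p i) n).obj (ModuleCat.of R M))) :
    Subsingleton ↥((localCohomology (⨅ i, p i) n).obj (ModuleCat.of R M)) := by
  exact stmt17_general p
    ((Module.supportDim_eq_ringKrullDim_quotient_annihilator R M).trans hn.symm).le hvan
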